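/- Let A be a k × m integer matrix whose columns sum to the zero vector in Z^k (the strong column condition) and with k-determinantal d_k(A) = 1. Then for every ε > 0 there exists δ = δ(ε, A) > 0 such that for every sufficiently large finite abelian group G and every X ⊆ G with |X| ≥ ε|G|, the system Ax = 0 has at least δ·|G|^{m−k} solutions x ∈ X^m. (This follows from the removal lemma for abelian groups together with the ε|G| trivial solutions x = (x_0, ..., x_0), x_0 ∈ X.) -/

import Mathlib

open Finset

/-- The `k`-determinantal of a `k × m` integer matrix: the gcd of all its `k × k` minors. -/
noncomputable def detGcd {k m : ℕ} (A : Matrix (Fin k) (Fin m) ℤ) : ℕ :=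
  Finset.univ.gcd (fun f : Fin k ↪ Fin m => (A.submatrix id f).det.natAbs)

/-!
Let `K` be the group of solutions of `A x = 0` in `G`; it contains the constant vectors because the
columns of `A` sum to zero, and `|K| ≥ |G| ^ (m - k)`. For a combinatorial line of words `w` over
the alphabet of column indices, `(a, b) ↦ a + ∑ i, b i (w i)`, where `a ∈ G` and every `b i ∈ K`,
takes on the points of the line values that form an element of `K`, and every element of `K` arises
equally often in this way. For each `w` the value is uniformly distributed in `G`, so on average the
set of words with value in `X` has density at least `ε`, and by the density Hales–Jewett theorem it
contains one and the same line for a positive proportion of all `(a, b)`. Hence a positive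
proportion of `K` has all its coordinates in `X`.

The density Hales–Jewett theorem is proved by induction on the alphabet, along the lines of
Dodos, Kanellopoulos and Tyros. A line-free set of nearly critical density over `κ ∪ {none}` is, on
a subspace, disjoint from an intersection of `κ`-many insensitive sets which is not small. The
complement of that intersection can be almost partitioned into subspaces, on one of which the
density must exceed the critical one.
-/

open Combinatorics (Line)
open scoped BigOperators

namespace DensityHalesJewett

/-- The uniform density of a set; it is `0` if the ambient type is infinite. -/
noncomputable def density {Ω : Type*} (D : Set Ω) : ℝ := Nat.card D / Nat.card Ω

/-- `D` contains all points of some combinatorial line. -/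
def ContainsLine {α ι : Type*} (D : Set (ι → α)) : Prop := ∃ L : Line α ι, ∀ a, L a ∈ D

/-- The density Hales–Jewett property of an alphabet `α`: in some finite dimension, every set of
words over `α` of density at least `c` contains a combinatorial line. -/
def IsDensityHalesJewett (α : Type*) : Prop :=
  ∀ c : ℝ, 0 < c → ∃ (ι : Type) (_ : Finite ι),
    ∀ D : Set (ι → α), c ≤ density D → ContainsLine D

lemma density_nonneg {Ω : Type*} (D : Set Ω) : 0 ≤ density D := by
  unfold density
  positivity

section Density

-- Expectations need a `Fintype` instance; taking the same one everywhere lets every statement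
-- below assume `Finite` only.
attribute [local instance high] Fintype.ofFinite

section General

variable {Ω Ω' Λ : Type*} [Finite Ω] [Finite Ω'] [Finite Λ]

lemma density_eq_expect (D : Set Ω) : density D = 𝔼 x, D.indicator 1 x := by
  classical
  rw [density, Fintype.expect_eq_sum_div_card]
  simp [Set.indicator_apply, Finset.sum_boole, Nat.card_eq_fintype_card, Fintype.card_subtype]

lemma density_le_one (D : Set Ω) : density D ≤ 1 :=
  div_le_one_of_le₀ (mod_cast Nat.card_le_card_of_injective _ Subtype.val_injective) (by positivity)

lemma nonempty_of_density_pos {Ω : Type*} {D : Set Ω} (h : 0 < density D) : D.Nonempty := by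
  rw [Set.nonempty_iff_ne_empty]
  rintro rfl
  simp [density] at h

lemma half_le_density {f : Ω → ℝ} {c : ℝ} (hf : ∀ x, f x ≤ 1) (hc : 0 < c) (h : c ≤ 𝔼 x, f x) :
    c / 2 ≤ density {x | c / 2 ≤ f x} := by
  have : Nonempty Ω := by
    by_contra! hΩ
    simp only [Finset.univ_eq_empty, Finset.expect_empty] at h
    exact hc.not_ge h
  have key : 𝔼 x, f x ≤ 𝔼 x, ({x | c / 2 ≤ f x}.indicator 1 x + c / 2) := by
    gcongr with x
    by_cases hx : c / 2 ≤ f x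
    · rw [Set.indicator_of_mem (Set.mem_ofPred_eq ▸ hx), Pi.one_apply]
      linarith [hf x]
    · rw [Set.indicator_of_notMem (Set.mem_ofPred_eq ▸ hx)]
      linarith
  rw [Finset.expect_add_distrib, ← density_eq_expect, Fintype.expect_const] at key
  linarith

lemma density_le_sum_of_subset_iUnion {D : Set Ω} {E : Λ → Set Ω} (h : D ⊆ ⋃ i, E i) :
    density D ≤ ∑ i, density (E i) := by
  simp_rw [density, Nat.card_coe_set_eq, ← Finset.sum_div]
  gcongr
  exact_mod_cast (Set.ncard_le_ncard h (Set.toFinite _)).trans (Set.ncard_iUnion_le_of_fintype E)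

lemma exists_div_card_le_density {D : Set Ω} {E : Λ → Set Ω} {c : ℝ} (hc : 0 < c)
    (hD : c ≤ density D) (h : D ⊆ ⋃ i, E i) : ∃ i, c / Nat.card Λ ≤ density (E i) := by
  have hsum : c ≤ ∑ i, density (E i) := hD.trans (density_le_sum_of_subset_iUnion h)
  have : Nonempty Λ := by
    by_contra! hΛ
    simp only [Finset.univ_eq_empty, Finset.sum_empty] at hsum
    exact hc.not_ge hsum
  obtain ⟨i, -, hi⟩ := Finset.exists_le_of_sum_le (f := fun _ : Λ ↦ c / Nat.card Λ)
    Finset.univ_nonempty (by simpa [mul_div_cancel₀] using hsum)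
  exact ⟨i, hi⟩

end General

section Words

variable {α ι₁ ι₂ η Ω Ω' : Type*} [Finite α] [Finite ι₁] [Finite ι₂] [Finite η] [Finite Ω]
  [Finite Ω']

lemma expect_prod (f : Ω × Ω' → ℝ) :
    𝔼 p, f p = 𝔼 x, 𝔼 y, f (x, y) := by
  rw [← Finset.expect_product' univ univ fun x y ↦ f (x, y)]
  exact Finset.expect_congr (by ext; simp) fun _ _ ↦ rfl

lemma density_prod (D : Set (Ω × Ω')) : density D = 𝔼 x, density {y | (x, y) ∈ D} := by
  simp_rw [density_eq_expect, expect_prod]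
  rfl

lemma expect_sumElim (f : (ι₁ ⊕ ι₂ → α) → ℝ) :
    𝔼 x, f x = 𝔼 x : ι₁ → α, 𝔼 y : ι₂ → α, f (Sum.elim x y) := by
  rw [← expect_prod fun p : (ι₁ → α) × (ι₂ → α) ↦ f (Sum.elim p.1 p.2)]
  exact Fintype.expect_equiv (Equiv.sumArrowEquivProdArrow ι₁ ι₂ α) _ _ fun x ↦ by
    simp [Equiv.sumArrowEquivProdArrow]

lemma expect_optionElim (f : (Option η → α) → ℝ) :
    𝔼 x, f x = 𝔼 a, 𝔼 z : η → α, f fun o ↦ o.elim a z := by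
  rw [← expect_prod fun p : α × (η → α) ↦ f fun o ↦ o.elim p.1 p.2]
  refine Fintype.expect_equiv (Equiv.piOptionEquivProd (β := fun _ ↦ α)) _ _ fun x ↦ ?_
  congr 1 with o
  cases o <;> rfl

lemma density_eq_expect_sumElim (D : Set (ι₁ ⊕ ι₂ → α)) :
    density D = 𝔼 x : ι₁ → α, density {y : ι₂ → α | Sum.elim x y ∈ D} := by
  simp_rw [density_eq_expect, expect_sumElim]
  rfl

lemma expect_density_comm (E : Ω → Set Ω') :
    𝔼 x, density (E x) = 𝔼 y, density {x | y ∈ E x} := by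
  simp_rw [density_eq_expect]
  exact Finset.expect_comm ..

instance {ι : Type*} [Finite ι] : Finite (Line α ι) :=
  .of_injective Line.idxFun fun _ _ ↦ Line.ext

lemma IsDensityHalesJewett.exists_line_le_density (hα : IsDensityHalesJewett α) {c : ℝ}
    (hc : 0 < c) :
    ∃ (ι : Type) (_ : Finite ι), ∃ θ > 0, ∀ (Ω : Type*) [Finite Ω] (D : Ω → Set (ι → α)),
      c ≤ 𝔼 ω, density (D ω) → ∃ L : Line α ι, θ ≤ density {ω | ∀ a, L a ∈ D ω} := by
  obtain ⟨ι, _, hι⟩ := hα (c / 2) (half_pos hc)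
  refine ⟨ι, inferInstance, c / 2 / (Nat.card (Line α ι) + 1), by positivity, fun Ω _ D hD ↦ ?_⟩
  obtain ⟨L, hL⟩ := exists_div_card_le_density (half_pos hc)
    (half_le_density (fun ω ↦ density_le_one (D ω)) hc hD)
    (E := fun L : Line α ι ↦ {ω | ∀ a, L a ∈ D ω})
    fun ω hω ↦ by simpa [ContainsLine] using hι (D ω) hω
  have : (0 : ℝ) < Nat.card (Line α ι) := mod_cast Nat.card_pos_iff.2 ⟨⟨L⟩, inferInstance⟩
  refine ⟨L, hL.trans' ?_⟩
  gcongr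
  linarith

end Words

section Subspaces

variable {α β ι ι₁ ι₂ η ζ : Type*}

/-- The composition of two combinatorial subspaces. -/
def subspaceComp (l : Combinatorics.Subspace ζ α ι) (l' : Combinatorics.Subspace η α ζ) :
    Combinatorics.Subspace η α ι where
  idxFun i := (l.idxFun i).elim Sum.inl l'.idxFun
  proper e := by
    obtain ⟨j, hj⟩ := l'.proper e
    obtain ⟨i, hi⟩ := l.proper j
    exact ⟨i, by simp [hi, hj]⟩

@[simp]
lemma subspaceComp_apply (l : Combinatorics.Subspace ζ α ι) (l' : Combinatorics.Subspace η α ζ)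
    (z : η → α) : subspaceComp l l' z = l (l' z) := by
  ext i
  cases h : l.idxFun i <;> simp [subspaceComp, Combinatorics.Subspace.coe_apply, h]

/-- A combinatorial subspace extended by the constant word `y`. -/
def subspaceHorizontal (l : Combinatorics.Subspace η α ι₁) (y : ι₂ → α) :
    Combinatorics.Subspace η α (ι₁ ⊕ ι₂) where
  idxFun := Sum.elim l.idxFun (Sum.inl ∘ y)
  proper e := (l.proper e).elim fun i hi ↦ ⟨.inl i, hi⟩

@[simp]
lemma subspaceHorizontal_apply (l : Combinatorics.Subspace η α ι₁) (y : ι₂ → α) (z : η → α) :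
    subspaceHorizontal l y z = Sum.elim (l z) y := by
  ext (i | i) <;> rfl

/-- A combinatorial subspace preceded by the constant word `x`. -/
def subspaceVertical (x : ι₁ → α) (l : Combinatorics.Subspace η α ι₂) :
    Combinatorics.Subspace η α (ι₁ ⊕ ι₂) where
  idxFun := Sum.elim (Sum.inl ∘ x) l.idxFun
  proper e := (l.proper e).elim fun i hi ↦ ⟨.inr i, hi⟩

@[simp]
lemma subspaceVertical_apply (x : ι₁ → α) (l : Combinatorics.Subspace η α ι₂) (z : η → α) :
    subspaceVertical x l z = Sum.elim x (l z) := by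
  ext (i | i) <;> rfl

/-- The image of a combinatorial subspace under a map of alphabets. -/
def subspaceMap (f : α → β) (l : Combinatorics.Subspace η α ι) :
    Combinatorics.Subspace η β ι where
  idxFun i := (l.idxFun i).map f id
  proper e := (l.proper e).imp fun i hi ↦ by simp [hi]

@[simp]
lemma subspaceMap_apply (f : α → β) (l : Combinatorics.Subspace η α ι) (z : η → α) :
    subspaceMap f l (f ∘ z) = f ∘ l z := by
  ext i
  cases h : l.idxFun i <;> simp [subspaceMap, Combinatorics.Subspace.coe_apply, h]

/-- The product of a combinatorial line and a combinatorial subspace; the coordinate `none` moves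
along the line. -/
def lineProd (L : Line α ι₁) (l : Combinatorics.Subspace η α ι₂) :
    Combinatorics.Subspace (Option η) α (ι₁ ⊕ ι₂) where
  idxFun := Sum.elim (fun i ↦ (L.idxFun i).elim (.inr none) .inl)
    fun i ↦ (l.idxFun i).map id some
  proper
    | none => L.proper.elim fun i hi ↦ ⟨.inl i, by simp [hi]⟩
    | some e => (l.proper e).elim fun i hi ↦ ⟨.inr i, by simp [hi]⟩

@[simp]
lemma lineProd_apply (L : Line α ι₁) (l : Combinatorics.Subspace η α ι₂) (z : Option η → α) :
    lineProd L l z = Sum.elim (L (z none)) (l (z ∘ some)) := by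
  ext (i | i)
  · cases h : L.idxFun i <;> simp [lineProd, Combinatorics.Subspace.coe_apply, h]
  · cases h : l.idxFun i <;> simp [lineProd, Combinatorics.Subspace.coe_apply, h]

lemma subspace_injective (l : Combinatorics.Subspace η α ι) :
    Function.Injective fun z : η → α ↦ l z := by
  intro z z' h
  ext e
  obtain ⟨i, hi⟩ := l.proper e
  simpa [Combinatorics.Subspace.coe_apply, hi] using congrFun h i

lemma ContainsLine.of_subspace (l : Combinatorics.Subspace η α ι) {D : Set (ι → α)}
    (h : ContainsLine {z | l z ∈ D}) : ContainsLine D := by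
  obtain ⟨L, hL⟩ := h
  refine ⟨⟨fun i ↦ (l.idxFun i).elim some L.idxFun, ?_⟩, fun a ↦ ?_⟩
  · obtain ⟨e, he⟩ := L.proper
    obtain ⟨i, hi⟩ := l.proper e
    exact ⟨i, by simp [hi, he]⟩
  · suffices h : l (L a) = (⟨fun i ↦ (l.idxFun i).elim some L.idxFun, _⟩ : Line α ι) a from h ▸ hL a
    ext i
    cases h : l.idxFun i <;> simp [Combinatorics.Subspace.coe_apply, h]

end Subspaces

section Splitting

variable {σ T η : Type*} [Finite σ] [Finite T] [Finite η]

lemma expect_le_of_expect_comp_embedding_le [Nonempty T] (e : σ ↪ T) {H : T → ℝ} {b c : ℝ}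
    (hb : ∀ a, H a ≤ b) (hc : 𝔼 a, H (e a) ≤ c) :
    𝔼 a, H a ≤ c + (b - c) * (1 - (Nat.card σ : ℝ) / Nat.card T) := by
  have hsum : ∑ a, (b - H (e a)) ≤ ∑ a, (b - H a) := by
    rw [← Finset.sum_map univ e fun a ↦ b - H a]
    exact Finset.sum_le_sum_of_subset_of_nonneg (Finset.subset_univ _)
      fun a _ _ ↦ sub_nonneg.2 (hb a)
  have hσ : (Nat.card σ : ℝ) * (b - c) ≤ ∑ a, (b - H (e a)) := by
    rw [Finset.sum_sub_distrib, ← Fintype.card_mul_expect fun a ↦ H (e a), Finset.sum_const,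
      Finset.card_univ, nsmul_eq_mul, ← mul_sub, Nat.card_eq_fintype_card]
    gcongr
  have hT : ∑ a, (b - H a) = Nat.card T * (b - 𝔼 a, H a) := by
    rw [Finset.sum_sub_distrib, ← Fintype.card_mul_expect H, Finset.sum_const,
      Finset.card_univ, nsmul_eq_mul, ← mul_sub, Nat.card_eq_fintype_card]
  have hpos : (0 : ℝ) < Nat.card T := mod_cast Nat.card_pos
  have hgap : Nat.card σ * (b - c) / Nat.card T ≤ b - 𝔼 a, H a := by
    rw [div_le_iff₀' hpos, ← hT]
    exact hσ.trans hsum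
  linear_combination hgap

/-- Each new coordinate shrinks the excess over `c` by a factor `1 - |σ| / |T|`. -/
lemma exists_expect_le_of_expect_line_le [Nonempty T] (σ : Type*) [Finite σ] (R : ℕ) :
    ∃ (ι : Type) (_ : Finite ι), ∀ (e : σ ↪ T) (h : (ι → T) → ℝ) (c : ℝ), (∀ x, h x ≤ 1) → 0 ≤ c →
      (∀ L : Line T ι, 𝔼 a : σ, h (L (e a)) ≤ c) →
      𝔼 x, h x ≤ c + (1 - (Nat.card σ : ℝ) / Nat.card T) ^ R := by
  induction R with
  | zero =>
    refine ⟨Empty, inferInstance, fun e h c h1 hc _ ↦ ?_⟩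
    rw [pow_zero]
    exact (Finset.expect_le Finset.univ_nonempty fun x _ ↦ h1 x).trans (by linarith)
  | succ R ih =>
    obtain ⟨ι, _, ih⟩ := ih
    refine ⟨Unit ⊕ ι, inferInstance, fun e h c h1 hc hL ↦ ?_⟩
    set r := (1 - (Nat.card σ : ℝ) / Nat.card T) ^ R with hr
    let H : T → ℝ := fun a ↦ 𝔼 y : ι → T, h (Sum.elim (fun _ ↦ a) y)
    have hexpect : 𝔼 x, h x = 𝔼 a, H a := by
      rw [expect_sumElim]
      exact Fintype.expect_equiv (Equiv.funUnique Unit T) _ _ fun x ↦ rfl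
    have hle (a : T) : H a ≤ c + r :=
      ih e _ c (fun _ ↦ h1 _) hc fun L ↦ by simpa using hL (L.vertical fun _ ↦ a)
    have hσ : 𝔼 a, H (e a) ≤ c := by
      rw [Finset.expect_comm]
      refine Finset.expect_le Finset.univ_nonempty fun y _ ↦ ?_
      simpa only [Line.horizontal_apply] using! hL ((Line.diagonal T Unit).horizontal y)
    calc 𝔼 x, h x = 𝔼 a, H a := hexpect
      _ ≤ c + (c + r - c) * (1 - (Nat.card σ : ℝ) / Nat.card T) :=
        expect_le_of_expect_comp_embedding_le e hle hσ
      _ = c + (1 - (Nat.card σ : ℝ) / Nat.card T) ^ (R + 1) := by rw [pow_succ, hr]; ring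

lemma exists_le_expect_line (σ T : Type*) [Finite σ] [Finite T] [Nonempty σ] {ε : ℝ} (hε : 0 < ε) :
    ∃ (ι : Type) (_ : Finite ι), ∀ (e : σ ↪ T) (h : (ι → T) → ℝ) (c : ℝ), (∀ x, h x ≤ 1) → 0 ≤ c →
      c + ε ≤ 𝔼 x, h x → ∃ L : Line T ι, c ≤ 𝔼 a : σ, h (L (e a)) := by
  rcases isEmpty_or_nonempty (σ ↪ T) with _ | ⟨⟨e₀⟩⟩
  · exact ⟨Empty, inferInstance, fun e ↦ isEmptyElim e⟩
  have : Nonempty T := .map e₀ inferInstance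
  have hpos : (0 : ℝ) < Nat.card σ / Nat.card T :=
    div_pos (mod_cast Nat.card_pos) (mod_cast Nat.card_pos)
  obtain ⟨R, hR⟩ := exists_pow_lt_of_lt_one hε (sub_lt_self 1 hpos)
  obtain ⟨ι, _, hι⟩ := exists_expect_le_of_expect_line_le (T := T) σ R
  refine ⟨ι, inferInstance, fun e h c h1 hc hexpect ↦ ?_⟩
  by_contra! hL
  linarith [hι e h c h1 hc fun L ↦ (hL L).le]

/-- In some finite dimension, every function on `T`-words bounded above by `1` nearly keeps its
average on some `η`-dimensional subspace whose parameters are restricted to a copy of `σ`. -/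
def HasDenseRestrictions (η σ T : Type*) [Finite η] [Finite σ] [Finite T] : Prop :=
  ∀ ε : ℝ, 0 < ε → ∃ (ι : Type) (_ : Finite ι), ∀ (e : σ ↪ T) (f : (ι → T) → ℝ) (c : ℝ),
    (∀ x, f x ≤ 1) → 0 ≤ c → c + ε ≤ 𝔼 x, f x →
    ∃ l : Combinatorics.Subspace η T ι, c ≤ 𝔼 z : η → σ, f (l (e ∘ z))

lemma HasDenseRestrictions.of_equiv {η' : Type*} [Finite η'] (u : η ≃ η')
    (h : HasDenseRestrictions η σ T) : HasDenseRestrictions η' σ T := by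
  intro ε hε
  obtain ⟨ι, _, hι⟩ := h ε hε
  refine ⟨ι, inferInstance, fun e f c hf hc hcf ↦ ?_⟩
  obtain ⟨l, hl⟩ := hι e f c hf hc hcf
  refine ⟨l.reindex u (.refl T) (.refl ι), hl.trans_eq ?_⟩
  refine Fintype.expect_equiv (u.arrowCongr (.refl σ)) _ _ fun z ↦ ?_
  congr 1 with i
  simp [Function.comp_def]

lemma HasDenseRestrictions.of_isEmpty [IsEmpty η] : HasDenseRestrictions η σ T := by
  refine fun ε hε ↦ ⟨Empty, inferInstance, fun e f c _ _ hcf ↦ ⟨⟨Empty.elim, isEmptyElim⟩, ?_⟩⟩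
  obtain ⟨x, -, hx⟩ := Finset.exists_le_of_le_expect Finset.univ_nonempty hcf
  exact Finset.le_expect Finset.univ_nonempty fun z _ ↦
    (by linarith : c ≤ f x).trans_eq (congrArg f (Subsingleton.elim _ _))

lemma HasDenseRestrictions.option [Nonempty σ] (h : HasDenseRestrictions η σ T) :
    HasDenseRestrictions (Option η) σ T := by
  intro ε hε
  obtain ⟨ι₁, _, hι₁⟩ := exists_le_expect_line σ T (half_pos hε)
  obtain ⟨ι₂, _, hι₂⟩ := h (ε / 2) (half_pos hε)
  refine ⟨ι₁ ⊕ ι₂, inferInstance, fun e f c hf hc hcf ↦ ?_⟩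
  have : Nonempty T := .map e inferInstance
  obtain ⟨L, hL⟩ := hι₁ e (fun x ↦ 𝔼 y : ι₂ → T, f (Sum.elim x y)) (c + ε / 2)
    (fun _ ↦ Finset.expect_le Finset.univ_nonempty fun _ _ ↦ hf _) (by positivity)
    (by rw [← expect_sumElim]; linarith)
  rw [Finset.expect_comm] at hL
  obtain ⟨l, hl⟩ := hι₂ e _ c
    (fun _ ↦ Finset.expect_le Finset.univ_nonempty fun _ _ ↦ hf _) hc hL
  refine ⟨lineProd L l, hl.trans_eq ?_⟩
  rw [expect_optionElim, Finset.expect_comm]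
  simp [Function.comp_def]

theorem hasDenseRestrictions (η σ T : Type*) [Finite η] [Finite σ] [Finite T] [Nonempty σ] :
    HasDenseRestrictions η σ T := by
  refine Finite.induction_empty_option (P := fun η ↦ ∀ [Finite η], HasDenseRestrictions η σ T)
    (fun {η η'} u h _ ↦ ?_) .of_isEmpty (fun h _ ↦ h.option) η
  have := Finite.of_equiv η' u.symm
  exact h.of_equiv u

end Splitting

section Insensitive

variable {κ η ι ι₁ ι₂ : Type*}

theorem IsDensityHalesJewett.exists_subspace [Finite κ] (hκ : IsDensityHalesJewett κ)
    (η : Type*) [Finite η] :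
    ∀ c : ℝ, 0 < c → ∃ (ι : Type) (_ : Finite ι), ∀ D : Set (ι → κ), c ≤ density D →
      ∃ l : Combinatorics.Subspace η κ ι, ∀ z, l z ∈ D := by
  induction η using Finite.induction_empty_option with
  | of_equiv u ih =>
    refine fun c hc ↦ (ih c hc).imp fun ι ↦ .imp fun _ hι D hD ↦ ?_
    obtain ⟨l, hl⟩ := hι D hD
    refine ⟨l.reindex u (.refl κ) (.refl ι), fun z ↦ ?_⟩
    convert hl (z ∘ u) using 1
    ext i
    simp
  | h_empty =>
    refine fun c hc ↦ ⟨Empty, inferInstance, fun D hD ↦ ⟨⟨Empty.elim, (nomatch ·)⟩, fun z ↦ ?_⟩⟩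
    obtain ⟨x, hx⟩ := nonempty_of_density_pos (hc.trans_le hD)
    rwa [Subsingleton.elim x _] at hx
  | h_option ih =>
    intro c hc
    obtain ⟨ι₁, _, θ, hθ, hι₁⟩ := hκ.exists_line_le_density hc
    obtain ⟨ι₂, _, hι₂⟩ := ih θ hθ
    refine ⟨ι₁ ⊕ ι₂, inferInstance, fun D hD ↦ ?_⟩
    rw [density_eq_expect_sumElim, expect_density_comm] at hD
    obtain ⟨L, hL⟩ := hι₁ _ _ hD
    obtain ⟨l, hl⟩ := hι₂ _ hL
    exact ⟨lineProd L l, fun z ↦ by simpa using! hl (z ∘ some) (z none)⟩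

/-- The word obtained from `x` by replacing the extra letter `none` with `i`. -/
def fill (i : κ) (x : ι → Option κ) : ι → κ := fun j ↦ (x j).getD i

lemma fill_sumElim (i : κ) (x : ι₁ → Option κ) (y : ι₂ → Option κ) :
    fill i (Sum.elim x y) = Sum.elim (fill i x) (fill i y) := by
  ext (j | j) <;> rfl

/-- Membership in `F` does not change when letters `none` and `some i` are interchanged. -/
def IsInsensitive (i : κ) (F : Set (ι → Option κ)) : Prop :=
  ∀ x y, fill i x = fill i y → (x ∈ F ↔ y ∈ F)

namespace IsInsensitive

variable {i : κ}

protected lemma compl {F : Set (ι → Option κ)} (h : IsInsensitive i F) : IsInsensitive i Fᶜ :=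
  fun x y hxy ↦ not_congr (h x y hxy)

lemma preimage_subspace {F : Set (ι → Option κ)} (h : IsInsensitive i F)
    (l : Combinatorics.Subspace η (Option κ) ι) : IsInsensitive i {z | l z ∈ F} := by
  refine fun x y hxy ↦ h _ _ ?_
  ext j
  cases hj : l.idxFun j with
  | inl a => simp [fill, Combinatorics.Subspace.coe_apply, hj]
  | inr e => simpa [fill, Combinatorics.Subspace.coe_apply, hj] using! congrFun hxy e

lemma preimage_sumElim_left {F : Set (ι₁ ⊕ ι₂ → Option κ)} (h : IsInsensitive i F)
    (y : ι₂ → Option κ) : IsInsensitive i {x | Sum.elim x y ∈ F} :=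
  fun _ _ hx ↦ h _ _ (by rw [fill_sumElim, fill_sumElim, hx])

lemma preimage_sumElim_right {F : Set (ι₁ ⊕ ι₂ → Option κ)} (h : IsInsensitive i F)
    (x : ι₁ → Option κ) : IsInsensitive i {y | Sum.elim x y ∈ F} :=
  fun _ _ hy ↦ h _ _ (by rw [fill_sumElim, fill_sumElim, hy])

end IsInsensitive

/-- By insensitivity, a subspace over the smaller alphabet that lies in `F` stays in `F` when its
parameters take the value `none`. -/
theorem IsDensityHalesJewett.exists_subspace_of_isInsensitive [Finite κ] [Nonempty κ]
    (hκ : IsDensityHalesJewett κ) (i : κ) (η : Type*) [Finite η] {β : ℝ} (hβ : 0 < β) :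
    ∃ (ι : Type) (_ : Finite ι), ∀ F : Set (ι → Option κ), IsInsensitive i F → β ≤ density F →
      ∃ l : Combinatorics.Subspace η (Option κ) ι, ∀ z, l z ∈ F := by
  obtain ⟨ζ, _, hζ⟩ := hκ.exists_subspace η (β / 2) (half_pos hβ)
  obtain ⟨ι, _, hι⟩ := hasDenseRestrictions ζ κ (Option κ) (β / 2) (half_pos hβ)
  refine ⟨ι, inferInstance, fun F hF hFβ ↦ ?_⟩
  rw [density_eq_expect] at hFβ
  obtain ⟨l, hl⟩ := hι .some (F.indicator 1) (β / 2)
    (fun x ↦ Set.indicator_apply_le' (by simp) (by simp)) (half_pos hβ).le (by linarith)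
  obtain ⟨l', hl'⟩ := hζ {z | l (some ∘ z) ∈ F} (hl.trans_eq (density_eq_expect _).symm)
  refine ⟨subspaceComp l (subspaceMap some l'), fun z ↦ ?_⟩
  have hfill : fill i (some ∘ fill i z) = fill i z := rfl
  refine ((hF.preimage_subspace _) _ z hfill).1 ?_
  simpa using! hl' (fill i z)

end Insensitive

section Indicator

variable {Ω Z : Type*} [Finite Ω] [Finite Z]

lemma inv_card_le_density {D : Set Ω} (hD : D.Nonempty) : (Nat.card Ω : ℝ)⁻¹ ≤ density D := by
  have := hD.to_subtype
  rw [density, ← one_div]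
  gcongr
  exact_mod_cast Nat.card_pos (α := D)

lemma mul_inv_card_le_expect_density {D : Ω → Set Z} {S : Set Ω} {c : ℝ} (hS : c ≤ density S)
    (hD : ∀ x ∈ S, (D x).Nonempty) : c * (Nat.card Z : ℝ)⁻¹ ≤ 𝔼 x, density (D x) :=
  calc c * (Nat.card Z : ℝ)⁻¹ ≤ density S * (Nat.card Z : ℝ)⁻¹ := by gcongr
    _ = 𝔼 x, S.indicator 1 x * (Nat.card Z : ℝ)⁻¹ := by rw [density_eq_expect, Finset.expect_mul]
    _ ≤ 𝔼 x, density (D x) := by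
      gcongr with x
      by_cases hx : x ∈ S
      · simpa [hx] using inv_card_le_density (hD x hx)
      · simpa [hx] using density_nonneg _

lemma density_diff {R F : Set Ω} (h : R ⊆ F) : density (F \ R) = density F - density R := by
  simp_rw [density, Nat.card_coe_set_eq, ← sub_div]
  rw [Set.ncard_sdiff h, Nat.cast_sub (Set.ncard_le_ncard h)]

lemma expect_indicator_le_density (D : Set Ω) {w : Ω → ℝ} (hw : ∀ x, w x ≤ 1) :
    𝔼 x, D.indicator w x ≤ density D := by
  rw [density_eq_expect]
  gcongr with x
  exact hw x

lemma expect_indicator_range_nonpos {g : Z → Ω} (hg : Function.Injective g) {u : Ω → ℝ}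
    (h : 𝔼 z, u (g z) ≤ 0) : 𝔼 x, (Set.range g).indicator u x ≤ 0 := by
  classical
  have hsum : ∑ x, (Set.range g).indicator u x = ∑ z, u (g z) := by
    rw [← Finset.sum_image hg.injOn, Finset.sum_indicator_eq_sum_filter]
    congr 1
    ext x
    simp
  rw [Fintype.expect_eq_sum_div_card, hsum, ← Fintype.card_mul_expect]
  exact div_nonpos_of_nonpos_of_nonneg (mul_nonpos_of_nonneg_of_nonpos (by positivity) h)
    (by positivity)

lemma expect_indicator_eq_add_diff {R F : Set Ω} (h : R ⊆ F) (w : Ω → ℝ) :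
    𝔼 x, F.indicator w x = 𝔼 x, R.indicator w x + 𝔼 x, (F \ R).indicator w x := by
  simp [Set.indicator_sdiff h, Finset.expect_sub_distrib]

lemma expect_indicator_sumElim_le {α ι₁ ι₂ : Type*} [Finite α] [Nonempty α] [Finite ι₁] [Finite ι₂]
    {F : Set (ι₁ ⊕ ι₂ → α)} {w : (ι₁ ⊕ ι₂ → α) → ℝ} {b r : ℝ}
    (h : ∀ x, 𝔼 y, {y | Sum.elim x y ∈ F}.indicator (fun y ↦ w (Sum.elim x y)) y ≤
      b + r * density {y | Sum.elim x y ∈ F}) :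
    𝔼 v, F.indicator w v ≤ b + r * density F :=
  calc 𝔼 v, F.indicator w v
      = 𝔼 x, 𝔼 y, {y | Sum.elim x y ∈ F}.indicator (fun y ↦ w (Sum.elim x y)) y :=
        expect_sumElim _
    _ ≤ 𝔼 x : ι₁ → α, (b + r * density {y | Sum.elim x y ∈ F}) := by
      gcongr with x
      exact h x
    _ = b + r * density F := by
      rw [Finset.expect_add_distrib, Fintype.expect_const, ← Finset.mul_expect,
        ← density_eq_expect_sumElim]

end Indicator

section SubspaceIncrement

variable {κ : Type*}

lemma exists_subspace_selector {i : κ} {η ι : Type*} {c : ℝ}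
    (hι : ∀ F : Set (ι → Option κ), IsInsensitive i F → c ≤ density F →
      ∃ l : Combinatorics.Subspace η (Option κ) ι, ∀ z, l z ∈ F) :
    ∃ B : Set (ι → Option κ) → Set (ι → Option κ), (∀ F, B F ⊆ F) ∧
      (∀ F, IsInsensitive i F → c ≤ density F → (B F).Nonempty) ∧
      ∀ F, B F = ∅ ∨ ∃ l : Combinatorics.Subspace η (Option κ) ι, B F = Set.range fun z ↦ l z := by
  have hselect (F : Set (ι → Option κ)) : ∃ B ⊆ F,
      (IsInsensitive i F → c ≤ density F → B.Nonempty) ∧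
      (B = ∅ ∨ ∃ l : Combinatorics.Subspace η (Option κ) ι, B = Set.range fun z ↦ l z) := by
    by_cases hF : IsInsensitive i F ∧ c ≤ density F
    · obtain ⟨l, hl⟩ := hι F hF.1 hF.2
      exact ⟨_, Set.range_subset_iff.2 hl, fun _ _ ↦ Set.range_nonempty _, .inr ⟨l, rfl⟩⟩
    · exact ⟨∅, Set.empty_subset _, fun h h' ↦ (hF ⟨h, h'⟩).elim, .inl rfl⟩
  choose B hsub hne hrange using hselect
  exact ⟨B, hsub, hne, hrange⟩

variable [Finite κ]

/-- The removed set is a union of subspaces, one from each dense slice of `F`; the slice at `y`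
does not see a change of `y` that `F` is insensitive to, which keeps what is left insensitive. -/
lemma exists_removable_subset {i : κ} {η ι₁ ι₂ : Type*} [Finite η] [Finite ι₁] [Finite ι₂] {β : ℝ}
    (hβ : 0 < β)
    (hι₁ : ∀ F : Set (ι₁ → Option κ), IsInsensitive i F → β / 2 ≤ density F →
      ∃ l : Combinatorics.Subspace η (Option κ) ι₁, ∀ z, l z ∈ F)
    {F : Set (ι₁ ⊕ ι₂ → Option κ)} (hF : IsInsensitive i F) (hFβ : β ≤ density F) :
    ∃ R ⊆ F, β / 2 * (Nat.card (ι₁ → Option κ) : ℝ)⁻¹ ≤ density R ∧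
      (∀ x, IsInsensitive i {y | Sum.elim x y ∈ F \ R}) ∧
      ∀ w : (ι₁ ⊕ ι₂ → Option κ) → ℝ,
        (∀ l : Combinatorics.Subspace η (Option κ) (ι₁ ⊕ ι₂), 𝔼 z, w (l z) ≤ 0) →
        𝔼 x, R.indicator w x ≤ 0 := by
  obtain ⟨B, hBsub, hBne, hBrange⟩ := exists_subspace_selector hι₁
  let slice (y : ι₂ → Option κ) : Set (ι₁ → Option κ) := {x | Sum.elim x y ∈ F}
  let R : Set (ι₁ ⊕ ι₂ → Option κ) := {v | v ∘ Sum.inl ∈ B (slice (v ∘ Sum.inr))}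
  have hslice (w : (ι₁ ⊕ ι₂ → Option κ) → ℝ) : 𝔼 v, R.indicator w v =
      𝔼 y, 𝔼 x, (B (slice y)).indicator (fun x ↦ w (Sum.elim x y)) x := by
    rw [expect_sumElim, Finset.expect_comm]
    rfl
  refine ⟨R, fun v hv ↦ ?_, ?_, fun x ↦ ?_, fun w hw ↦ ?_⟩
  · simpa [slice] using hBsub _ hv
  · have hdense : β / 2 ≤ density {y | β / 2 ≤ density (slice y)} := by
      refine half_le_density (fun y ↦ density_le_one _) hβ (hFβ.trans_eq ?_)
      rw [density_eq_expect_sumElim, expect_density_comm]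
      rfl
    rw [density_eq_expect, hslice]
    refine (mul_inv_card_le_expect_density hdense fun y hy ↦
      hBne _ (hF.preimage_sumElim_left y) hy).trans_eq ?_
    simp_rw [density_eq_expect]
    rfl
  · intro y y' hyy'
    have hslice_eq : slice y = slice y' :=
      Set.ext fun x ↦ hF _ _ (by rw [fill_sumElim, fill_sumElim, hyy'])
    exact and_congr (hF.preimage_sumElim_right x y y' hyy') (by simp [R, hslice_eq])
  · rw [hslice]
    refine Finset.expect_le Finset.univ_nonempty fun y _ ↦ ?_
    rcases hBrange (slice y) with h | ⟨l, h⟩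
    · simp [h]
    · rw [h]
      exact expect_indicator_range_nonpos (subspace_injective l)
        (by simpa using hw (subspaceHorizontal l y))

variable [Nonempty κ]

lemma exists_expect_indicator_le_pow (hκ : IsDensityHalesJewett κ) (i : κ) (η : Type*) [Finite η]
    {β : ℝ} (hβ : 0 < β) :
    ∃ q : ℝ, 0 ≤ q ∧ q < 1 ∧ ∀ n : ℕ, ∃ (ι : Type) (_ : Finite ι), ∀ F : Set (ι → Option κ),
      IsInsensitive i F → ∀ w : (ι → Option κ) → ℝ, (∀ x, w x ≤ 1) →
      (∀ l : Combinatorics.Subspace η (Option κ) ι, 𝔼 z, w (l z) ≤ 0) →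
      𝔼 x, F.indicator w x ≤ β + q ^ n * density F := by
  obtain ⟨ι₁, _, hι₁⟩ := hκ.exists_subspace_of_isInsensitive i η (half_pos hβ)
  have hcard : (0 : ℝ) < Nat.card (ι₁ → Option κ) := mod_cast Nat.card_pos
  set c : ℝ := min (β / 2 * (Nat.card (ι₁ → Option κ) : ℝ)⁻¹) 1
  have hc0 : 0 < c := by positivity
  have hc1 : c ≤ 1 := min_le_right _ _
  refine ⟨1 - c, by linarith, by linarith, fun n ↦ ?_⟩
  induction n with
  | zero =>
    refine ⟨Empty, inferInstance, fun F _ w hw _ ↦ ?_⟩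
    linarith [expect_indicator_le_density F hw]
  | succ n ih =>
    obtain ⟨ι₂, _, hι₂⟩ := ih
    refine ⟨ι₁ ⊕ ι₂, inferInstance, fun F hF w hw hl ↦ ?_⟩
    rcases lt_or_ge (density F) β with hFβ | hFβ
    · have : 0 ≤ (1 - c) ^ (n + 1) * density F :=
        mul_nonneg (pow_nonneg (by linarith) _) (density_nonneg F)
      linarith [expect_indicator_le_density F hw]
    obtain ⟨R, hRF, hRc, hins, hR⟩ := exists_removable_subset hβ hι₁ hF hFβ
    have hrest : density (F \ R) ≤ (1 - c) * density F := by
      rw [density_diff hRF]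
      nlinarith [hRc.trans' (min_le_left _ 1), density_le_one F]
    have hslices : 𝔼 v, (F \ R).indicator w v ≤ β + (1 - c) ^ n * density (F \ R) :=
      expect_indicator_sumElim_le fun x ↦ hι₂ _ (hins x) _ (fun _ ↦ hw _) fun l ↦ by
        simpa using hl (subspaceVertical x l)
    calc 𝔼 v, F.indicator w v = 𝔼 v, R.indicator w v + 𝔼 v, (F \ R).indicator w v :=
          expect_indicator_eq_add_diff hRF w
      _ ≤ 0 + (β + (1 - c) ^ n * density (F \ R)) := add_le_add (hR w hl) hslices
      _ ≤ 0 + (β + (1 - c) ^ n * ((1 - c) * density F)) := by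
        gcongr
      _ = β + (1 - c) ^ (n + 1) * density F := by ring

lemma exists_expect_indicator_le (hκ : IsDensityHalesJewett κ) (i : κ) (η : Type*) [Finite η]
    {β : ℝ} (hβ : 0 < β) :
    ∃ (ι : Type) (_ : Finite ι), ∀ F : Set (ι → Option κ), IsInsensitive i F →
      ∀ (w : (ι → Option κ) → ℝ) (b : ℝ), (∀ x, w x ≤ 1) → 0 ≤ b →
      (∀ l : Combinatorics.Subspace η (Option κ) ι, 𝔼 z, w (l z) ≤ b) →
      𝔼 x, F.indicator w x ≤ b + β := by
  obtain ⟨q, hq0, hq1, hq⟩ := exists_expect_indicator_le_pow hκ i η (half_pos hβ)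
  obtain ⟨n, hn⟩ := exists_pow_lt_of_lt_one (half_pos hβ) hq1
  obtain ⟨ι, _, hι⟩ := hq n
  refine ⟨ι, inferInstance, fun F hF w b hw hb hl ↦ ?_⟩
  have hshift : 𝔼 x, F.indicator (fun x ↦ w x - b) x ≤ β / 2 + q ^ n * density F := by
    refine hι F hF _ (fun x ↦ by linarith [hw x]) fun l ↦ ?_
    rw [Finset.expect_sub_distrib, Fintype.expect_const]
    exact sub_nonpos.2 (hl l)
  have hsplit : 𝔼 x, F.indicator w x = 𝔼 x, F.indicator (fun x ↦ w x - b) x + b * density F := by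
    rw [density_eq_expect, Finset.mul_expect, ← Finset.expect_add_distrib]
    refine Finset.expect_congr rfl fun x _ ↦ ?_
    by_cases hx : x ∈ F <;> simp [hx]
  rw [hsplit]
  nlinarith [density_le_one F, density_nonneg F, pow_nonneg hq0 n]

lemma exists_expect_indicator_biInter_le (hκ : IsDensityHalesJewett κ) (s : Finset κ) :
    ∀ (η : Type) [Finite η] (β : ℝ), 0 < β → ∃ (ι : Type) (_ : Finite ι),
      ∀ F : κ → Set (ι → Option κ), (∀ i, IsInsensitive i (F i)) →
      ∀ (w : (ι → Option κ) → ℝ) (b : ℝ), (∀ x, w x ≤ 1) → 0 ≤ b →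
      (∀ l : Combinatorics.Subspace η (Option κ) ι, 𝔼 z, w (l z) ≤ b) →
      𝔼 x, (⋂ i ∈ s, F i).indicator w x ≤ b + β := by
  classical
  induction s using Finset.induction_on with
  | empty =>
    refine fun η _ β hβ ↦ ⟨η, inferInstance, fun F _ w b _ _ hl ↦ ?_⟩
    have hdefault (z : η → Option κ) :
        (default : Combinatorics.Subspace η (Option κ) η) z = z := rfl
    simpa [hdefault] using (hl default).trans (le_add_of_nonneg_right hβ.le)
  | insert i s _ ih =>
    intro η _ β hβ
    obtain ⟨ζ, _, hζ⟩ := ih η (β / 2) (half_pos hβ)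
    obtain ⟨ι, _, hι⟩ := exists_expect_indicator_le hκ i ζ (half_pos hβ)
    refine ⟨ι, inferInstance, fun F hF w b hw hb hl ↦ ?_⟩
    rw [Finset.set_biInter_insert, ← Set.indicator_indicator]
    refine (hι (F i) (hF i) _ (b + β / 2) (fun x ↦ ?_) (by positivity) fun l ↦ ?_).trans_eq
      (by ring)
    · exact Set.indicator_apply_le' (fun _ ↦ hw x) fun _ ↦ zero_le_one
    · refine (hζ (fun j ↦ {z | l z ∈ F j}) (fun j ↦ (hF j).preimage_subspace l)
        (fun z ↦ w (l z)) b (fun _ ↦ hw _) hb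
        fun l' ↦ by simpa using hl (subspaceComp l l')).trans_eq' ?_
      refine Finset.expect_congr rfl fun z _ ↦ ?_
      simp [Set.indicator_apply]

end SubspaceIncrement

section CriticalDensity

/-- The limiting maximal density of a line-free set of words over `α` as the dimension grows; the
alphabet `α` has the density Hales–Jewett property if and only if it is `0`. -/
noncomputable def criticalDensity (α : Type*) : ℝ :=
  sInf {b | ∃ (ι : Type) (_ : Finite ι), ∀ D : Set (ι → α), ¬ ContainsLine D → density D ≤ b}

variable (α : Type*)

lemma exists_density_le_criticalDensity_add [Finite α] {γ : ℝ} (hγ : 0 < γ) :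
    ∃ (ι : Type) (_ : Finite ι), ∀ D : Set (ι → α), ¬ ContainsLine D →
      density D ≤ criticalDensity α + γ := by
  obtain ⟨b, ⟨ι, _, hb⟩, hlt⟩ := exists_lt_of_csInf_lt (s := {b | ∃ (ι : Type) (_ : Finite ι),
    ∀ D : Set (ι → α), ¬ ContainsLine D → density D ≤ b})
    ⟨1, Unit, inferInstance, fun D _ ↦ density_le_one D⟩
    (show criticalDensity α < criticalDensity α + γ by linarith)
  exact ⟨ι, inferInstance, fun D hD ↦ (hb D hD).trans hlt.le⟩

lemma exists_criticalDensity_sub_lt_density [Nonempty α] {γ : ℝ} (hγ : 0 < γ) (ι : Type)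
    [Finite ι] : ∃ D : Set (ι → α), ¬ ContainsLine D ∧ criticalDensity α - γ < density D := by
  by_contra! h
  have hbdd : BddBelow {b | ∃ (ι : Type) (_ : Finite ι),
      ∀ D : Set (ι → α), ¬ ContainsLine D → density D ≤ b} := by
    refine ⟨0, fun b ⟨ι, _, hb⟩ ↦ (density_nonneg ∅).trans (hb ∅ ?_)⟩
    simp [ContainsLine]
  have : criticalDensity α ≤ criticalDensity α - γ := csInf_le hbdd ⟨ι, inferInstance, h⟩
  linarith

variable {α}

lemma isDensityHalesJewett_of_criticalDensity_nonpos [Finite α] (h : criticalDensity α ≤ 0) :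
    IsDensityHalesJewett α := by
  intro c hc
  obtain ⟨ι, _, hι⟩ := exists_density_le_criticalDensity_add α (half_pos hc)
  refine ⟨ι, inferInstance, fun D hD ↦ ?_⟩
  by_contra hline
  linarith [hι D hline]

lemma exists_criticalDensity_sub_le_density_slice (α : Type*) [Finite α] [Nonempty α] {e : ℝ}
    (he : 0 < e) (ι₁ : Type) [Finite ι₁] :
    ∃ (ι₂ : Type) (_ : Finite ι₂) (D : Set (ι₁ ⊕ ι₂ → α)), ¬ ContainsLine D ∧
      ∀ x, criticalDensity α - e ≤ density {y | Sum.elim x y ∈ D} := by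
  set N : ℝ := (Nat.card (ι₁ → α) : ℝ) with hN
  have hN0 : 0 < N := Nat.cast_pos.2 Nat.card_pos
  set γ : ℝ := e / (2 * N) with hγ
  have hγ0 : 0 < γ := by positivity
  obtain ⟨ι₂, _, hι₂⟩ := exists_density_le_criticalDensity_add α hγ0
  obtain ⟨D, hD, hlt⟩ := exists_criticalDensity_sub_lt_density α hγ0 (ι₁ ⊕ ι₂)
  refine ⟨ι₂, inferInstance, D, hD, fun x ↦ ?_⟩
  have hle (x : ι₁ → α) : density {y | Sum.elim x y ∈ D} ≤ criticalDensity α + γ :=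
    hι₂ _ fun h ↦ hD <| .of_subspace (subspaceVertical x default) <| by
      simp only [subspaceVertical_apply]
      exact h
  rw [density_eq_expect_sumElim] at hlt
  have hexpect := expect_le_of_expect_comp_embedding_le
    ⟨fun _ : Unit ↦ x, Function.injective_of_subsingleton _⟩ hle
    (Fintype.expect_const (density {y | Sum.elim x y ∈ D})).le
  rw [Nat.card_unique, Nat.cast_one, ← hN] at hexpect
  have hγN : 2 * γ = e * (1 / N) := by rw [hγ]; field_simp
  have hgap : (criticalDensity α + γ - density {y | Sum.elim x y ∈ D}) * (1 / N) < e * (1 / N) := by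
    linear_combination hlt + hexpect + hγN
  linarith [lt_of_mul_lt_mul_right hgap (by positivity)]

end CriticalDensity

section Correlation

variable {κ ι₁ ι₂ M η : Type*}

/-- The word `v` preceded by the word obtained from `u` by reading each letter `inl m` as a copy of
the letter of `v` at `m`. -/
def copyWord (u : ι₁ → M ⊕ κ) (v : M → κ) : ι₁ ⊕ M → κ :=
  Sum.elim (fun j ↦ (u j).elim v id) v

lemma exists_subspace_fill_eq_copyWord (L : Line κ M) {m : M} (hm : L.idxFun m = none)
    {e : Option κ → M ⊕ κ} (henone : e none = .inl m) (hesome : ∀ b, e (some b) = .inr b)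
    (t : Combinatorics.Subspace η (M ⊕ κ) ι₁) :
    ∃ l : Combinatorics.Subspace η (Option κ) (ι₁ ⊕ M), (∀ z, l z (.inr m) = none) ∧
      ∀ z i, fill i (l z) = copyWord (t (e ∘ z)) (L i) := by
  refine ⟨⟨Sum.elim (fun j ↦ (t.idxFun j).map (Sum.elim L.idxFun some) id) (.inl ∘ L.idxFun),
    fun e' ↦ (t.proper e').elim fun j hj ↦ ⟨.inl j, by simp [hj]⟩⟩, fun z ↦ ?_, fun z i ↦ ?_⟩
  · simp [Combinatorics.Subspace.coe_apply, hm]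
  · ext (j | j)
    · rcases h : t.idxFun j with (m' | b) | e'
      · simp [fill, copyWord, Combinatorics.Subspace.coe_apply, h]
      · simp [fill, copyWord, Combinatorics.Subspace.coe_apply, h]
      · cases hz : z e' <;>
          simp [fill, copyWord, Combinatorics.Subspace.coe_apply, h, hz, hm, henone, hesome]
    · simp [fill, copyWord, Combinatorics.Subspace.coe_apply]

theorem IsDensityHalesJewett.exists_subspace_le_expect_density_fill [Finite κ] [Nonempty κ]
    (hκ : IsDensityHalesJewett κ) {d : ℝ} (hd : 0 < d) :
    ∃ θ > 0, ∀ (η : Type*) [Finite η], ∃ (ι : Type) (_ : Finite ι), ∀ (Ω : Type*) [Finite Ω]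
      (E : (ι → κ) → Set Ω), (∀ x, d ≤ density (E x)) →
      ∃ l : Combinatorics.Subspace η (Option κ) ι, (∃ j, ∀ z, l z j = none) ∧
        θ ≤ 𝔼 z, density {ω | ∀ i, ω ∈ E (fill i (l z))} := by
  obtain ⟨M, _, θ, hθ, hM⟩ := hκ.exists_line_le_density hd
  refine ⟨θ / 2, half_pos hθ, fun η _ ↦ ?_⟩
  obtain ⟨ι₁, _, hι₁⟩ := hasDenseRestrictions η (Option κ) (M ⊕ κ) (θ / 2) (half_pos hθ)
  refine ⟨ι₁ ⊕ M, inferInstance, fun Ω _ E hE ↦ ?_⟩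
  let D (p : (ι₁ → M ⊕ κ) × Ω) : Set (M → κ) := {v | p.2 ∈ E (copyWord p.1 v)}
  have hD (u : ι₁ → M ⊕ κ) : d ≤ 𝔼 ω, density (D (u, ω)) := by
    rw [expect_density_comm]
    exact Finset.le_expect Finset.univ_nonempty fun v _ ↦ hE (copyWord u v)
  obtain ⟨L, hL⟩ := hM _ D (by
    rw [expect_prod]
    exact Finset.le_expect Finset.univ_nonempty fun u _ ↦ hD u)
  obtain ⟨m, hm⟩ := L.proper
  rw [density_prod] at hL
  let e : Option κ ↪ M ⊕ κ := Function.Embedding.inr.optionElim (.inl m) (by simp)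
  obtain ⟨t, ht⟩ := hι₁ e
    (fun u ↦ density {ω | ∀ i, ω ∈ E (copyWord u (L i))}) (θ / 2)
    (fun _ ↦ density_le_one _) (half_pos hθ).le (by rw [add_halves]; exact hL)
  obtain ⟨l, hlm, hl⟩ := exists_subspace_fill_eq_copyWord L hm (e := e) rfl (fun _ ↦ rfl) t
  exact ⟨l, ⟨_, hlm⟩, by simpa only [hl] using ht⟩

lemma exists_line_of_eq_none {x : ι₁ → Option κ} {j : ι₁} (hx : x j = none) :
    ∃ L : Line (Option κ) ι₁, L none = x ∧ ∀ i, L (some i) = some ∘ fill i x := by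
  refine ⟨⟨fun j ↦ (x j).map some, j, by simp [hx]⟩, funext fun j ↦ ?_, fun i ↦ funext fun j ↦ ?_⟩
  · cases h : x j <;> simp [h]
  · cases h : x j <;> simp [fill, h]

lemma disjoint_iInter_of_not_containsLine {D : Set (ι₁ ⊕ ι₂ → Option κ)} (hD : ¬ ContainsLine D)
    (l : Combinatorics.Subspace η (Option κ) ι₁) {j : ι₁} (hj : ∀ z, l z j = none)
    (y : ι₂ → Option κ) :
    Disjoint {z | Sum.elim (l z) y ∈ D} (⋂ i, {z | Sum.elim (some ∘ fill i (l z)) y ∈ D}) := by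
  refine Set.disjoint_left.2 fun z hz hzE ↦ hD ?_
  obtain ⟨L, hnone, hsome⟩ := exists_line_of_eq_none (hj z)
  refine ⟨L.horizontal y, fun o ↦ ?_⟩
  rw [Line.horizontal_apply]
  cases o with
  | none => rwa [hnone]
  | some i => rw [hsome]; exact Set.mem_iInter.1 hzE i

end Correlation

section Induction

variable {κ : Type*} [Finite κ] [Nonempty κ]

/-- The complement is cut into the sets of words lying in exactly the `E i` with `i ∈ P`, for the
proper subsets `P` of `κ`; each of them is again an intersection of insensitive sets. -/
lemma exists_expect_indicator_compl_iInter_le (hκ : IsDensityHalesJewett κ) (η : Type) [Finite η]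
    {β : ℝ} (hβ : 0 < β) :
    ∃ (ι : Type) (_ : Finite ι), ∀ E : κ → Set (ι → Option κ), (∀ i, IsInsensitive i (E i)) →
      ∀ w : (ι → Option κ) → ℝ, (∀ x, w x ≤ 1) →
      (∀ l : Combinatorics.Subspace η (Option κ) ι, 𝔼 z, w (l z) ≤ 0) →
      𝔼 x, (⋂ i, E i)ᶜ.indicator w x ≤ β := by
  classical
  have hcard : (0 : ℝ) < Nat.card (Set κ) := mod_cast Nat.card_pos
  obtain ⟨ι, _, hι⟩ := exists_expect_indicator_biInter_le hκ univ η _ (div_pos hβ hcard)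
  refine ⟨ι, inferInstance, fun E hE w hw hl ↦ ?_⟩
  let atom (P : Set κ) : Set (ι → Option κ) := {x | {i | x ∈ E i} = P}
  have hatom (P : Set κ) : 𝔼 x, (atom P).indicator w x ≤ β / Nat.card (Set κ) := by
    have hinter : atom P = ⋂ i ∈ univ, if i ∈ P then E i else (E i)ᶜ := by
      ext x
      simp only [atom, Set.mem_ofPred_eq, Set.ext_iff, Set.mem_iInter,
        Finset.mem_univ, true_imp_iff]
      refine forall_congr' fun i ↦ ?_
      by_cases hi : i ∈ P <;> simp [hi]
    rw [hinter, ← zero_add (β / _)]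
    refine hι _ (fun i ↦ ?_) w 0 hw le_rfl hl
    split_ifs
    exacts [hE i, (hE i).compl]
  have hsum (x : ι → Option κ) :
      (⋂ i, E i)ᶜ.indicator w x = ∑ P ∈ univ.erase Set.univ, (atom P).indicator w x := by
    simp [atom, Set.indicator_apply, Set.eq_univ_iff_forall]
  calc 𝔼 x, (⋂ i, E i)ᶜ.indicator w x
      = ∑ P ∈ univ.erase Set.univ, 𝔼 x, (atom P).indicator w x := by
        simp_rw [hsum, Finset.expect_sum_comm]
    _ ≤ ∑ _P ∈ univ.erase (Set.univ : Set κ), β / Nat.card (Set κ) :=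
        Finset.sum_le_sum fun P _ ↦ hatom P
    _ ≤ ∑ _P : Set κ, β / Nat.card (Set κ) :=
        Finset.sum_le_sum_of_subset_of_nonneg (Finset.erase_subset _ _) fun _ _ _ ↦ by positivity
    _ = β := by
        rw [Finset.sum_const, Finset.card_univ, nsmul_eq_mul, ← Nat.card_eq_fintype_card]
        field_simp

lemma exists_density_add_mul_density_iInter_le (hκ : IsDensityHalesJewett κ) (η : Type) [Finite η]
    {β : ℝ} (hβ : 0 < β) :
    ∃ (ι : Type) (_ : Finite ι), ∀ (D : Set (ι → Option κ)) (E : κ → Set (ι → Option κ)) (a : ℝ),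
      (∀ i, IsInsensitive i (E i)) → Disjoint D (⋂ i, E i) → 0 ≤ a →
      (∀ l : Combinatorics.Subspace η (Option κ) ι, density {z | l z ∈ D} ≤ a) →
      density D + a * density (⋂ i, E i) ≤ a + β := by
  obtain ⟨ι, _, hι⟩ := exists_expect_indicator_compl_iInter_le hκ η hβ
  refine ⟨ι, inferInstance, fun D E a hE hdisj ha hl ↦ ?_⟩
  have hcompl : 𝔼 x, (⋂ i, E i)ᶜ.indicator (fun x ↦ D.indicator 1 x - a) x ≤ β := by
    refine hι E hE _ (fun x ↦ ?_) fun l ↦ ?_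
    · have : D.indicator (1 : (ι → Option κ) → ℝ) x ≤ 1 :=
        Set.indicator_apply_le' (fun _ ↦ le_rfl) fun _ ↦ zero_le_one
      linarith
    · rw [Finset.expect_sub_distrib, Fintype.expect_const, sub_nonpos]
      exact (density_eq_expect _).symm.trans_le (hl l)
  have hpointwise (x : ι → Option κ) :
      (⋂ i, E i)ᶜ.indicator (fun x ↦ D.indicator 1 x - a) x =
        D.indicator 1 x + a * (⋂ i, E i).indicator 1 x - a := by
    by_cases hx : x ∈ ⋂ i, E i
    · rw [Set.indicator_of_notMem (Set.notMem_compl_iff.2 hx), Set.indicator_of_mem hx,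
        Set.indicator_of_notMem (Set.disjoint_right.1 hdisj hx)]
      simp
    · rw [Set.indicator_of_mem hx, Set.indicator_of_notMem hx]
      simp
  simp_rw [hpointwise, Finset.expect_sub_distrib, Finset.expect_add_distrib, ← Finset.mul_expect,
    ← density_eq_expect, Fintype.expect_const] at hcompl
  linarith

/-- Were the critical density `d` positive, a nearly extremal line-free set would be correlated with
the complement of an intersection of insensitive sets, hence denser than `d` on a subspace. -/
theorem criticalDensity_option_nonpos (hκ : IsDensityHalesJewett κ) :
    criticalDensity (Option κ) ≤ 0 := by
  by_contra! hd
  set d := criticalDensity (Option κ)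
  obtain ⟨θ, hθ, hcorr⟩ := hκ.exists_subspace_le_expect_density_fill (half_pos hd)
  set g : ℝ := d * θ / 4 with hg
  have hg0 : 0 < g := by positivity
  obtain ⟨η, _, hη⟩ := exists_density_le_criticalDensity_add (Option κ) hg0
  obtain ⟨ζ, _, hζ⟩ := exists_density_add_mul_density_iInter_le hκ η hg0
  obtain ⟨ι, _, hι⟩ := hcorr ζ
  obtain ⟨ι', _, D, hD, hslice⟩ := exists_criticalDensity_sub_le_density_slice (Option κ)
    (lt_min hg0 (half_pos hd)) ι
  obtain ⟨l, ⟨j, hj⟩, hl⟩ := hι (ι' → Option κ) (fun x ↦ {y | Sum.elim (some ∘ x) y ∈ D})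
    fun x ↦ by linarith [hslice (some ∘ x), min_le_right g (d / 2)]
  let D' (y : ι' → Option κ) : Set (ζ → Option κ) := {z | Sum.elim (l z) y ∈ D}
  let E (y : ι' → Option κ) (i : κ) : Set (ζ → Option κ) :=
    {z | Sum.elim (some ∘ fill i (l z)) y ∈ D}
  have hE (y : ι' → Option κ) (i : κ) : IsInsensitive i (E y i) :=
    IsInsensitive.preimage_subspace (F := {x | Sum.elim (some ∘ fill i x) y ∈ D})
      (fun x x' h ↦ by simp [h]) l
  have hincrement (y : ι' → Option κ) :
      density (D' y) + (d + g) * density (⋂ i, E y i) ≤ d + g + g := by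
    refine hζ _ _ (d + g) (hE y)
      (disjoint_iInter_of_not_containsLine hD l hj y) (by positivity) fun l' ↦ hη _ fun h ↦ hD ?_
    exact .of_subspace (subspaceHorizontal (subspaceComp l l') y) (by simpa using! h)
  have haverage : 𝔼 y, density (D' y) + (d + g) * 𝔼 y, density (⋂ i, E y i) ≤ d + g + g := by
    rw [Finset.mul_expect, ← Finset.expect_add_distrib]
    exact Finset.expect_le Finset.univ_nonempty fun y _ ↦ hincrement y
  have hD'lower : d - g ≤ 𝔼 y, density (D' y) := by
    rw [expect_density_comm]
    refine Finset.le_expect Finset.univ_nonempty fun z _ ↦ (hslice (l z)).trans' ?_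
    linarith [min_le_left g (d / 2)]
  have hElower : θ ≤ 𝔼 y, density (⋂ i, E y i) := by
    rw [expect_density_comm]
    simpa [E] using hl
  nlinarith

end Induction

lemma density_preimage_equiv {Ω Ω' : Type*} (e : Ω ≃ Ω') (D : Set Ω') :
    density (e ⁻¹' D) = density D := by
  rw [density, density, Nat.card_congr e, Nat.card_preimage_of_injective e.injective (by simp)]

lemma IsDensityHalesJewett.of_equiv {α β : Type*} (e : α ≃ β) (h : IsDensityHalesJewett α) :
    IsDensityHalesJewett β := by
  refine fun c hc ↦ (h c hc).imp fun ι ↦ .imp fun _ hι D hD ↦ ?_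
  let f : (ι → α) ≃ (ι → β) := Equiv.piCongrRight fun _ ↦ e
  obtain ⟨L, hL⟩ := hι (f ⁻¹' D) (hD.trans_eq (density_preimage_equiv f D).symm)
  refine ⟨L.map e, fun b ↦ ?_⟩
  obtain ⟨a, rfl⟩ := e.surjective b
  rw [Line.map_apply]
  exact hL a

lemma IsDensityHalesJewett.option {α : Type*} [Finite α] (h : IsDensityHalesJewett α) :
    IsDensityHalesJewett (Option α) := by
  rcases isEmpty_or_nonempty α with _ | _
  · refine fun c hc ↦ ⟨Unit, inferInstance, fun D hD ↦ ⟨.diagonal _ _, fun a ↦ ?_⟩⟩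
    obtain ⟨x, hx⟩ := nonempty_of_density_pos (hc.trans_le hD)
    rwa [Subsingleton.elim x _] at hx
  · exact isDensityHalesJewett_of_criticalDensity_nonpos (criticalDensity_option_nonpos h)

theorem isDensityHalesJewett (α : Type*) [Finite α] : IsDensityHalesJewett α := by
  induction α using Finite.induction_empty_option with
  | of_equiv e h => exact h.of_equiv e
  | h_empty => exact fun c _ ↦ ⟨Unit, inferInstance, fun D _ ↦ ⟨.diagonal _ _, (nomatch ·)⟩⟩
  | h_option h => exact h.option

section Groups

lemma density_preimage_of_surjective {V H : Type*} [AddGroup V] [AddGroup H] [Finite V] [Finite H]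
    {φ : V →+ H} (hφ : Function.Surjective φ) (D : Set H) : density (φ ⁻¹' D) = density D := by
  have hshift (h : H) : density (φ ⁻¹' D) = density {v | φ v + h ∈ D} := by
    obtain ⟨u, rfl⟩ := hφ h
    simpa [Set.preimage] using (density_preimage_equiv (Equiv.addRight u) (φ ⁻¹' D)).symm
  calc density (φ ⁻¹' D) = 𝔼 _h : H, density (φ ⁻¹' D) := (Fintype.expect_const _).symm
    _ = 𝔼 h, density {v | φ v + h ∈ D} := Finset.expect_congr rfl fun h _ ↦ hshift h
    _ = 𝔼 v, density {h | φ v + h ∈ D} := expect_density_comm _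
    _ = 𝔼 _v : V, density D :=
      Finset.expect_congr rfl fun v _ ↦ density_preimage_equiv (Equiv.addLeft (φ v)) D
    _ = density D := Fintype.expect_const _

variable {G J ι : Type*} [AddCommGroup G] [Fintype ι]

lemma add_sum_line_mem {K : AddSubgroup (J → G)} (hK : ∀ a, Function.const J a ∈ K) (L : Line J ι)
    (a : G) (b : ι → K) : (fun j ↦ a + ∑ i, (b i : J → G) (L j i)) ∈ K := by
  have hcoord (i : ι) : (fun j ↦ (b i : J → G) (L j i)) ∈ K := by
    cases h : L.idxFun i with
    | none => simp [Line.coe_apply, h]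
    | some j => simpa [Line.coe_apply, h] using! hK ((b i : J → G) j)
  convert K.add_mem (hK a) (K.sum_mem fun i (_ : i ∈ univ) ↦ hcoord i) using 1
  ext j
  simp

/-- The homomorphism that sends `(a, b)` to the values of `w ↦ a + ∑ i, b i (w i)` on the points of
the line `L`. -/
def lineHom {K : AddSubgroup (J → G)} (hK : ∀ a, Function.const J a ∈ K) (L : Line J ι) :
    G × (ι → K) →+ K where
  toFun p := ⟨fun j ↦ p.1 + ∑ i, (p.2 i : J → G) (L j i), add_sum_line_mem hK L p.1 p.2⟩
  map_zero' := by ext j; simp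
  map_add' p q := by ext j; simp [Finset.sum_add_distrib, add_add_add_comm]

lemma lineHom_surjective {K : AddSubgroup (J → G)} (hK : ∀ a, Function.const J a ∈ K)
    (L : Line J ι) : Function.Surjective (lineHom hK L) := by
  classical
  intro x
  obtain ⟨i, hi⟩ := L.proper
  refine ⟨(0, Pi.single i x), ?_⟩
  ext j
  have : ∑ i', ((Pi.single i x : ι → K) i' : J → G) (L j i') = (x : J → G) (L j i) := by
    rw [Finset.sum_eq_single i (fun i' _ h ↦ by simp [h]) (by simp)]
    simp
  simpa [lineHom, hi] using this

theorem exists_le_density_addSubgroup (J : Type*) [Finite J] {ε : ℝ} (hε : 0 < ε) :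
    ∃ δ > 0, ∀ (G : Type*) [AddCommGroup G] [Finite G] (K : AddSubgroup (J → G)),
      (∀ a, Function.const J a ∈ K) → ∀ X : Set G, ε ≤ density X →
      δ ≤ density {x : K | ∀ j, (x : J → G) j ∈ X} := by
  rcases isEmpty_or_nonempty J with _ | _
  · exact ⟨1, one_pos, fun G _ _ K _ X _ ↦ by simp [density]⟩
  obtain ⟨ι, _, δ, hδ, hι⟩ := (isDensityHalesJewett J).exists_line_le_density hε
  refine ⟨δ, hδ, fun G _ _ K hK X hX ↦ ?_⟩
  let D (p : G × (ι → K)) : Set (ι → J) := {w | p.1 + ∑ i, (p.2 i : J → G) (w i) ∈ X}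
  have hD (w : ι → J) : density X ≤ density {p | w ∈ D p} := by
    rw [density_prod, expect_density_comm]
    refine Finset.le_expect Finset.univ_nonempty fun b _ ↦ ?_
    let e := Equiv.addRight (∑ i, (b i : J → G) (w i))
    have h : density (e ⁻¹' X) = density X := density_preimage_equiv e X
    exact h.ge
  have hDε : ε ≤ 𝔼 p, density (D p) := by
    rw [expect_density_comm]
    exact Finset.le_expect Finset.univ_nonempty fun w _ ↦ hX.trans (hD w)
  obtain ⟨L, hL⟩ := hι _ D hDε
  have hpre := density_preimage_of_surjective (lineHom_surjective hK L)
    {x : K | ∀ j, (x : J → G) j ∈ X}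
  exact hL.trans_eq hpre

end Groups

end Density

section Kernel

lemma natCard_le_natCard_mul_natCard_ker {V H : Type*} [AddGroup V] [AddGroup H] [Finite H]
    (φ : V →+ H) : Nat.card V ≤ Nat.card H * Nat.card φ.ker := by
  rw [← φ.ker.card_mul_index, AddSubgroup.index_ker, mul_comm]
  gcongr
  exact Nat.card_le_card_of_injective _ Subtype.val_injective

/-- The homomorphism `x ↦ A x` of a linear system over a module `G`, whose kernel is the group of
solutions. -/
def systemHom {I J R : Type*} [Fintype J] [Semiring R] (A : Matrix I J R) (G : Type*)
    [AddCommGroup G] [Module R G] : (J → G) →+ (I → G) where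
  toFun x r := ∑ j, A r j • x j
  map_zero' := by ext r; simp
  map_add' x y := by ext r; simp [smul_add, Finset.sum_add_distrib]

variable {I J R G : Type*} [Fintype J] [Semiring R] [AddCommGroup G] [Module R G]

lemma mem_ker_systemHom {A : Matrix I J R} {x : J → G} :
    x ∈ (systemHom A G).ker ↔ ∀ r, ∑ j, A r j • x j = 0 :=
  funext_iff

lemma const_mem_ker_systemHom {A : Matrix I J R} (hsum : ∀ r, ∑ j, A r j = 0) (a : G) :
    Function.const J a ∈ (systemHom A G).ker :=
  mem_ker_systemHom.2 fun r ↦ by simp [← Finset.sum_smul, hsum]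

lemma card_pow_le_natCard_ker_systemHom [Fintype I] [Fintype G] (A : Matrix I J R)
    (hcard : Fintype.card I ≤ Fintype.card J) :
    Fintype.card G ^ (Fintype.card J - Fintype.card I) ≤ Nat.card (systemHom A G).ker := by
  have hle := natCard_le_natCard_mul_natCard_ker (systemHom A G)
  rw [Nat.card_fun, Nat.card_fun, Nat.card_eq_fintype_card (α := G),
    Nat.card_eq_fintype_card (α := I), Nat.card_eq_fintype_card (α := J),
    ← Nat.add_sub_cancel' hcard, pow_add] at hle
  exact Nat.le_of_mul_le_mul_left hle (pow_pos Fintype.card_pos _)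

end Kernel

end DensityHalesJewett

open DensityHalesJewett in
theorem stmt12_general {I J R : Type*} [Fintype I] [Fintype J] [Semiring R] (A : Matrix I J R)
    (hcard : Fintype.card I ≤ Fintype.card J) (hsum : ∀ r, ∑ j, A r j = 0) {ε : ℝ} (hε : 0 < ε) :
    ∃ δ : ℝ, 0 < δ ∧ ∀ (G : Type*) [AddCommGroup G] [Module R G] [Fintype G] (X : Finset G),
      ε * Fintype.card G ≤ X.card →
        δ * (Fintype.card G : ℝ) ^ (Fintype.card J - Fintype.card I) ≤
          Nat.card {x : J → G // (∀ j, x j ∈ X) ∧ ∀ r, ∑ j, A r j • x j = 0} := by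
  obtain ⟨δ, hδ, hJ⟩ := exists_le_density_addSubgroup J hε
  refine ⟨δ, hδ, fun G _ _ _ X hX ↦ ?_⟩
  let K := (systemHom A G).ker
  have hG : (0 : ℝ) < Fintype.card G := mod_cast Fintype.card_pos
  have hK : (0 : ℝ) < Nat.card K := mod_cast Nat.card_pos
  have hsol : δ ≤ density {x : K | ∀ j, (x : J → G) j ∈ (X : Set G)} := by
    refine hJ G K (const_mem_ker_systemHom hsum) X ?_
    rw [density, Nat.card_eq_fintype_card (α := G), le_div_iff₀ hG]
    simpa using hX
  calc δ * (Fintype.card G : ℝ) ^ (Fintype.card J - Fintype.card I) ≤ δ * Nat.card K := by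
        gcongr
        exact_mod_cast card_pow_le_natCard_ker_systemHom A hcard
    _ ≤ Nat.card {x : K | ∀ j, (x : J → G) j ∈ (X : Set G)} := (le_div_iff₀ hK).1 hsol
    _ = Nat.card {x : J → G // (∀ j, x j ∈ X) ∧ ∀ r, ∑ j, A r j • x j = 0} := by
      congr 1
      refine Nat.card_congr
        ((Equiv.subtypeSubtypeEquivSubtypeInter (· ∈ K) fun x ↦ ∀ j, x j ∈ X).trans
          (Equiv.subtypeEquivRight fun x ↦ ?_))
      rw [mem_ker_systemHom, and_comm]

/-- let `A` be a `k × m` integer matrix whose columns sum to zero (the strong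
column condition) and with `d_k(A) = 1`. For every `ε > 0` there is `δ > 0` such that for
every sufficiently large finite abelian group `G` and every `X ⊆ G` with `|X| ≥ ε|G|`, the
system `Ax = 0` has at least `δ·|G|^{m−k}` solutions `x ∈ X^m`. -/
theorem stmt12 (k m : ℕ) (hkm : k ≤ m) (A : Matrix (Fin k) (Fin m) ℤ)
    (hsum : ∀ r : Fin k, ∑ j : Fin m, A r j = 0) (hdet : detGcd A = 1) :
    ∀ ε : ℝ, 0 < ε → ∃ δ : ℝ, 0 < δ ∧ ∃ n₀ : ℕ,
      ∀ (G : Type) [AddCommGroup G] [Fintype G], n₀ ≤ Fintype.card G →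
        ∀ X : Finset G, ε * Fintype.card G ≤ X.card →
          δ * (Fintype.card G : ℝ) ^ (m - k) ≤
            Nat.card {x : Fin m → G //
              (∀ i, x i ∈ X) ∧ ∀ r : Fin k, ∑ j : Fin m, A r j • x j = 0} := by
  intro ε hε
  obtain ⟨δ, hδ, h⟩ := stmt12_general A (by simpa) hsum hε
  exact ⟨δ, hδ, 0, fun G _ _ _ X hX ↦ by simpa using h G X hX⟩
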